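/- arXiv:2102.01149 — 2 statements merged into one kernel-verified Lean document; each statement's English description precedes it below -/
import Mathlib

section
/- Let ψ ∈ N(σ), i ∈ {1, …, |N(σ)|} with Pr[ψ ↝ i] > 0, and e ∈ E \ dom(ψ). Conditioned additionally on the event B(e) that e is selected by both σ and π*: α·E[μ(e) | B(e) ∧ ψ ↝ i] ≥ υ_ψ·E[δ⁺_ψ(e) | B(e) ∧ ψ ↝ i]. -/
/-!
Common framework for the Stochastic Submodular Cover problem
(Hellerstein–Kletenik–Parthasarathy, "A Tight Bound for Stochastic Submodular Cover").
-/

namespace SSC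

open Finset
open scoped Classical

noncomputable section

variable {E O : Type*}

/-- A subrealization assigns to each item either a state or `none` (unassigned).
A realization corresponds to the case where every item is assigned. -/
abbrev Sub (E O : Type*) := E → Option O

/-- `subext ψ ψ'` means `ψ ⊆ ψ'` as partial assignments of states to items. -/
def subext (ψ ψ' : Sub E O) : Prop := ∀ e o, ψ e = some o → ψ' e = some o

/-- `ssubext ψ ψ'` means `ψ ⊂ ψ'` (strict extension). -/
def ssubext (ψ ψ' : Sub E O) : Prop := subext ψ ψ' ∧ ψ ≠ ψ'

/-- Extend a subrealization `ψ` by assigning state `o` to item `e`. -/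
def updateSub [DecidableEq E] (ψ : Sub E O) (e : E) (o : O) : Sub E O :=
  fun e' => if e' = e then some o else ψ e'

/-- View a (full) realization as a subrealization. -/
def toSub (φ : E → O) : Sub E O := fun e => some (φ e)

variable [Fintype E] [DecidableEq E] [Fintype O] [DecidableEq O]

/-- An instance of the Stochastic Submodular Cover problem: positive item costs `c`,
a probability mass function `p` on realizations with mutually independent item states,
and a utility function `f` on subrealizations which is zero on the empty subrealization,
nonnegative, monotone and submodular (pointwise polymatroid), and equal to the goal
value `Q > 0` on every full realization (coverability). -/
structure Problem (E O : Type*) [Fintype E] [DecidableEq E] [Fintype O] [DecidableEq O] where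
  c : E → ℝ
  c_pos : ∀ e, 0 < c e
  p : (E → O) → ℝ
  p_nonneg : ∀ φ, 0 ≤ p φ
  p_sum : ∑ φ : E → O, p φ = 1
  indep : ∀ φ : E → O, p φ = ∏ e : E, ∑ φ' : E → O, if φ' e = φ e then p φ' else 0
  f : Sub E O → ℝ
  f_nonneg : ∀ ψ, 0 ≤ f ψ
  f_empty : f (fun _ => none) = 0
  f_mono : ∀ ψ ψ' : Sub E O, subext ψ ψ' → f ψ ≤ f ψ'
  f_submod : ∀ (ψ ψ' : Sub E O) (e : E) (o : O), subext ψ ψ' → ψ' e = none →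
      f (updateSub ψ' e o) - f ψ' ≤ f (updateSub ψ e o) - f ψ
  Q : ℝ
  Q_pos : 0 < Q
  f_cover : ∀ φ : E → O, f (toSub φ) = Q

variable (M : Problem E O)

/-- Expectation of a random variable `X` with respect to the random realization `Φ`. -/
def Ex (X : (E → O) → ℝ) : ℝ := ∑ φ : E → O, M.p φ * X φ

/-- Probability of an event `A` of the random realization `Φ`. -/
def Pr (A : (E → O) → Prop) : ℝ := ∑ φ : E → O, if A φ then M.p φ else 0

/-- Conditional expectation `E[X | A]`. -/
def cEx (X : (E → O) → ℝ) (A : (E → O) → Prop) : ℝ :=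
  (∑ φ : E → O, if A φ then M.p φ * X φ else 0) / Pr M A

/-- The random marginal increase in utility `F_ψ(e)` from observing the state of `e`. -/
def Fm (ψ : Sub E O) (e : E) (φ : E → O) : ℝ := M.f (updateSub ψ e (φ e)) - M.f ψ

/-- The unit price `υ(e|ψ) = c(e) / E[F_ψ(e)]`. -/
def price (ψ : Sub E O) (e : E) : ℝ := M.c e / Ex M (Fm M ψ e)

/-- An adaptive covering policy: at every subrealization `ψ` with `f ψ < Q` it selects an
item outside `dom ψ`. -/
def IsPolicy (π : Sub E O → E) : Prop := ∀ ψ : Sub E O, M.f ψ < M.Q → ψ (π ψ) = none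

/-- The `α`-approximate adaptive greedy policy: at every `ψ` with `f ψ < Q` the unit price of
the selected item `σ ψ` is at most `α` times the minimum unit price, i.e.
`υ(σ ψ | ψ) ≤ α · υ(e | ψ)` for every `e ∉ dom ψ`, written multiplicatively so that infinite
unit prices (zero expected marginal utility) are handled correctly. -/
def IsGreedy (α : ℝ) (σ : Sub E O → E) : Prop :=
  IsPolicy M σ ∧
    ∀ ψ : Sub E O, M.f ψ < M.Q → ∀ e : E, ψ e = none →
      M.c (σ ψ) * Ex M (Fm M ψ e) ≤ α * M.c e * Ex M (Fm M ψ (σ ψ))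

/-- One step of executing policy `π` on realization `φ`. -/
def stepPol (π : Sub E O → E) (φ : E → O) (ψ : Sub E O) : Sub E O :=
  if M.f ψ < M.Q then updateSub ψ (π ψ) (φ (π ψ)) else ψ

/-- The subrealization reached after `n` steps of executing `π` on `φ`. -/
def execAux (π : Sub E O → E) (φ : E → O) : ℕ → Sub E O
  | 0 => fun _ => none
  | n + 1 => stepPol M π φ (execAux π φ n)

/-- The cover `Ψ(π)` constructed by executing `π` on realization `φ`. -/
def cover (π : Sub E O → E) (φ : E → O) : Sub E O := execAux M π φ (Fintype.card E)

/-- `ψ` is visited when executing `π` on realization `φ`. -/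
def visits (π : Sub E O → E) (φ : E → O) (ψ : Sub E O) : Prop := ∃ n, execAux M π φ n = ψ

/-- The set `S(π)` of items selected when executing `π` on `φ`. -/
def Ssel (π : Sub E O → E) (φ : E → O) : Finset E :=
  Finset.univ.filter fun e => cover M π φ e ≠ none

/-- The cost `C(π)` incurred when executing `π` on `φ`. -/
def C (π : Sub E O → E) (φ : E → O) : ℝ := ∑ e ∈ Ssel M π φ, M.c e

/-- An adaptive covering policy of minimum expected cost. -/
def IsOptimal (π : Sub E O → E) : Prop :=
  IsPolicy M π ∧ ∀ π' : Sub E O → E, IsPolicy M π' → Ex M (C M π) ≤ Ex M (C M π')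

/-- `N(π)`: the non-leaf nodes of the decision tree of `π` — subrealizations with
`f ψ < Q` that are visited with positive probability. -/
def Nnodes (π : Sub E O → E) : Finset (Sub E O) :=
  Finset.univ.filter fun ψ => M.f ψ < M.Q ∧ 0 < Pr M fun φ => visits M π φ ψ

/-- The event `ψ ↝ i`, for a marker located at utility value `b = f(ρ_i)`:
`ψ` is the last subrealization visited by `σ` (on the given realization) whose
utility is at most `b`. -/
def leadsTo (σ : Sub E O → E) (b : ℝ) (ψ : Sub E O) (φ : E → O) : Prop :=
  visits M σ φ ψ ∧ M.f ψ ≤ b ∧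
    ∀ ψ' : Sub E O, visits M σ φ ψ' → M.f ψ' ≤ b → subext ψ' ψ

/-- The revenue `λ_i = υ_ψ · ε_i` collected by `σ` from the marker located at utility
value `b = f(ρ_i)` with interval length `εi`, where `ψ` is the unique subrealization
with `ψ ↝ i`. -/
def lam (σ : Sub E O → E) (b εi : ℝ) (φ : E → O) : ℝ :=
  ∑ ψ : Sub E O, if leadsTo M σ b ψ φ then price M ψ (σ ψ) * εi else 0

/-- The revenue `μ(e)` collected by the optimal policy `πs` from item `e`
(relative to the greedy policy `σ`, both executed on the same realization). -/
def mu (σ πs : Sub E O → E) (e : E) (φ : E → O) : ℝ :=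
  if e ∈ Ssel M πs φ then
    if e ∈ Ssel M σ φ then
      ∑ ψ : Sub E O,
        if visits M σ φ ψ ∧ M.f ψ < M.Q ∧ σ ψ = e then price M ψ e * Fm M ψ e φ else 0
    else M.c e
  else 0

/-- The total revenue `μ*` collected by the optimal policy. -/
def muStar (σ πs : Sub E O → E) (φ : E → O) : ℝ := ∑ e : E, mu M σ πs e φ

/-- Replay of the internal state of policy `πs` in the second stage of the hybrid policy:
starting from the empty subrealization, repeatedly query `πs`; an item whose state is
already recorded in `ψ'` is not re-selected, its recorded state being used instead. -/
def replayAux (πs : Sub E O → E) (ψ' : Sub E O) : ℕ → Sub E O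
  | 0 => fun _ => none
  | n + 1 =>
    if M.f (replayAux πs ψ' n) < M.Q then
      match ψ' (πs (replayAux πs ψ' n)) with
      | some o => updateSub (replayAux πs ψ' n) (πs (replayAux πs ψ' n)) o
      | none => replayAux πs ψ' n
    else replayAux πs ψ' n

/-- The hybrid policy `π^ψ0`: follow `σ` until `ψ0` is visited, then switch to executing
`πs` from the root of its tree, never re-selecting an item of `dom ψ0` and using the
state recorded in `ψ0` instead. -/
def hybrid (σ πs : Sub E O → E) (ψ0 : Sub E O) : Sub E O → E := fun ψ' =>
  if subext ψ0 ψ' then πs (replayAux M πs ψ' (Fintype.card E)) else σ ψ'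

/-- `δ⁺_ψ0(e)`: the marginal utility obtained by the hybrid policy `π^ψ0` when it selects
`e` during its second stage, and `0` if `e` is not selected in the second stage. -/
def deltaPlus (σ πs : Sub E O → E) (ψ0 : Sub E O) (e : E) (φ : E → O) : ℝ :=
  ∑ ψ' : Sub E O,
    if subext ψ0 ψ' ∧ visits M (hybrid M σ πs ψ0) φ ψ' ∧
        ssubext ψ' (cover M (hybrid M σ πs ψ0) φ) ∧ hybrid M σ πs ψ0 ψ' = e
    then Fm M ψ' e φ else 0


lemma aux_subext_trans {a b c : Sub E O} (h1 : subext a b) (h2 : subext b c) : subext a c :=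
  fun e o h => h2 e o (h1 e o h)

lemma aux_subext_refl (a : Sub E O) : subext a a := fun _ _ h => h

lemma aux_subext_update (ψ : Sub E O) (e : E) (o : O) (h : ψ e = none ∨ ψ e = some o) :
    subext ψ (updateSub ψ e o) := by
  intro e' o' h'
  unfold updateSub
  split_ifs with h1
  · subst h1
    rcases h with h | h
    · rw [h] at h'; cases h'
    · rw [h] at h'; exact h'
  · exact h'

lemma aux_exec_toSub (π : Sub E O → E) (φ : E → O) (n : ℕ) :
    subext (execAux M π φ n) (toSub φ) := by
  induction n with
  | zero => intro e o h; simp [execAux] at h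
  | succ n ih =>
    intro e o h
    simp only [execAux, stepPol] at h
    split_ifs at h with h1
    · unfold updateSub at h
      split_ifs at h with h2
      · rw [h2]; exact h
      · exact ih e o h
    · exact ih e o h

lemma aux_exec_none_or (π : Sub E O → E) (φ : E → O) (n : ℕ) (e : E) :
    execAux M π φ n e = none ∨ execAux M π φ n e = some (φ e) := by
  rcases h : execAux M π φ n e with _ | o
  · exact Or.inl rfl
  · right
    have := aux_exec_toSub M π φ n e o h
    exact this.symm

lemma aux_exec_succ (π : Sub E O → E) (φ : E → O) (n : ℕ) :
    subext (execAux M π φ n) (execAux M π φ (n+1)) := by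
  simp only [execAux, stepPol]
  split_ifs with h1
  · exact aux_subext_update _ _ _ (aux_exec_none_or M π φ n _)
  · exact aux_subext_refl _

lemma aux_exec_mono (π : Sub E O → E) (φ : E → O) {m n : ℕ} (h : m ≤ n) :
    subext (execAux M π φ m) (execAux M π φ n) := by
  induction n, h using Nat.le_induction with
  | base => exact aux_subext_refl _
  | succ n _ ih => exact aux_subext_trans ih (aux_exec_succ M π φ n)

lemma aux_none_of_subext {a b : Sub E O} (h : subext a b) {e : E} (hb : b e = none) :
    a e = none := by
  rcases ha : a e with _ | o
  · rfl
  · rw [h e o ha] at hb; cases hb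

/-- Executions that never touch `e` do not depend on the state of `e`. -/
lemma aux_exec_congr (π : Sub E O → E) (φ φ' : E → O) (e : E)
    (hφ : ∀ e', e' ≠ e → φ' e' = φ e') (n : ℕ) (h : execAux M π φ n e = none) :
    execAux M π φ' n = execAux M π φ n := by
  induction n with
  | zero => rfl
  | succ n ih =>
    have h0 := ih (aux_none_of_subext (aux_exec_succ M π φ n) h)
    simp only [execAux, stepPol] at h ⊢
    rw [h0]
    split_ifs at h ⊢ with h1
    · have : π (execAux M π φ n) ≠ e := by
        intro h2
        simp [updateSub, h2] at h
      rw [hφ _ this]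
    · rfl

lemma aux_mem_Ssel (π : Sub E O → E) (φ : E → O) (e : E) :
    e ∈ Ssel M π φ ↔ execAux M π φ (Fintype.card E) e ≠ none := by
  unfold Ssel cover
  refine Finset.mem_filter.trans ?_
  simp only [Finset.mem_univ, true_and]

lemma aux_sel_congr (π : Sub E O → E) (φ φ' : E → O) (e : E)
    (hφ : ∀ e', e' ≠ e → φ' e' = φ e') : e ∈ Ssel M π φ ↔ e ∈ Ssel M π φ' := by
  rw [aux_mem_Ssel, aux_mem_Ssel]
  constructor
  · intro h h'
    exact h (by rw [aux_exec_congr M π φ' φ e (fun e' he => (hφ e' he).symm) _ h']; exact h')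
  · intro h h'
    exact h (by rw [aux_exec_congr M π φ φ' e hφ _ h']; exact h')

lemma aux_visits_congr (π : Sub E O → E) (φ φ' : E → O) (e : E)
    (hφ : ∀ e', e' ≠ e → φ' e' = φ e') (ψ : Sub E O) (he : ψ e = none) :
    visits M π φ ψ ↔ visits M π φ' ψ := by
  constructor
  · rintro ⟨n, rfl⟩
    exact ⟨n, aux_exec_congr M π φ φ' e hφ n he⟩
  · rintro ⟨n, rfl⟩
    exact ⟨n, aux_exec_congr M π φ' φ e (fun e' he => (hφ e' he).symm) n he⟩

lemma aux_exec_next (π : Sub E O → E) (φ : E → O) (n : ℕ)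
    (h : M.f (execAux M π φ n) < M.Q) :
    execAux M π φ (n+1) =
      updateSub (execAux M π φ n) (π (execAux M π φ n)) (φ (π (execAux M π φ n))) := by
  simp only [execAux, stepPol, if_pos h]

lemma aux_leads_iff (σ : Sub E O → E) (b : ℝ) (ψ : Sub E O) (φ : E → O)
    (hf : M.f ψ < M.Q) (hn : ψ (σ ψ) = none) :
    leadsTo M σ b ψ φ ↔
      visits M σ φ ψ ∧ M.f ψ ≤ b ∧ b < M.f (updateSub ψ (σ ψ) (φ (σ ψ))) := by
  constructor
  · rintro ⟨⟨n, rfl⟩, hb, h⟩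
    refine ⟨⟨n, rfl⟩, hb, ?_⟩
    by_contra hcon
    have h2 := h _ ⟨n+1, aux_exec_next M σ φ n hf⟩ (not_lt.mp hcon)
    have h3 := aux_none_of_subext h2 hn
    simp [updateSub] at h3
  · rintro ⟨⟨n, rfl⟩, hb, h⟩
    refine ⟨⟨n, rfl⟩, hb, ?_⟩
    rintro ψ' ⟨m, rfl⟩ hm
    rcases le_or_gt m n with hmn | hmn
    · exact aux_exec_mono M σ φ hmn
    · exfalso
      have h1 := M.f_mono _ _ (aux_exec_mono M σ φ (Nat.succ_le_of_lt hmn))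
      rw [Nat.succ_eq_add_one, aux_exec_next M σ φ n hf] at h1
      linarith

lemma aux_exists_sel (π : Sub E O → E) (φ : E → O) (e : E) (n : ℕ)
    (h : execAux M π φ n e ≠ none) :
    ∃ m, M.f (execAux M π φ m) < M.Q ∧ π (execAux M π φ m) = e := by
  induction n with
  | zero => simp [execAux] at h
  | succ n ih =>
    by_cases h0 : execAux M π φ n e = none
    · by_cases h1 : M.f (execAux M π φ n) < M.Q
      · refine ⟨n, h1, ?_⟩
        rw [aux_exec_next M π φ n h1] at h
        by_contra h2
        apply h
        unfold updateSub
        rw [if_neg (fun h3 => h2 h3.symm)]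
        exact h0
      · exfalso
        apply h
        simp only [execAux, stepPol, if_neg h1]
        exact h0
    · exact ih h0

lemma aux_Fm_nonneg (ψ : Sub E O) (e : E) (φ : E → O) (h : ψ e = none) : 0 ≤ Fm M ψ e φ :=
  sub_nonneg.mpr (M.f_mono _ _ (aux_subext_update _ _ _ (Or.inl h)))

lemma aux_Ex_Fm_nonneg (ψ : Sub E O) (e : E) (h : ψ e = none) : 0 ≤ Ex M (Fm M ψ e) :=
  Finset.sum_nonneg fun φ _ => mul_nonneg (M.p_nonneg φ) (aux_Fm_nonneg M ψ e φ h)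

/-- Pointwise bound on `δ⁺`. -/
lemma aux_delta_le (σ πs : Sub E O → E) (ψ : Sub E O) (e : E) (φ : E → O) (he : ψ e = none) :
    deltaPlus M σ πs ψ e φ ≤ Fm M ψ e φ := by
  have hF := aux_Fm_nonneg M ψ e φ he
  unfold deltaPlus
  set H := hybrid M σ πs ψ
  by_cases hex : ∃ n, subext ψ (execAux M H φ n) ∧ M.f (execAux M H φ n) < M.Q ∧
      H (execAux M H φ n) = e ∧ execAux M H φ n e = none
  · obtain ⟨n, h1, h2, h3, h4⟩ := hex
    refine (Finset.sum_le_sum (g := fun ψ' => if ψ' = execAux M H φ n then Fm M ψ e φ else 0)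
      ?_).trans ?_
    · intro ψ' _
      by_cases hc : subext ψ ψ' ∧ visits M H φ ψ' ∧ ssubext ψ' (cover M H φ) ∧ H ψ' = e
      swap
      · rw [if_neg hc]; split_ifs
        · exact hF
        · exact le_refl _
      rw [if_pos hc]
      obtain ⟨g1, ⟨m, rfl⟩, -, g3⟩ := hc
      split_ifs with heq
      · rw [heq]
        exact M.f_submod _ _ _ _ h1 h4
      · by_cases hQ : M.f (execAux M H φ m) < M.Q
        · rcases aux_exec_none_or M H φ m e with hn | hn
          · exfalso
            rcases lt_trichotomy m n with h | h | h
            · have := aux_none_of_subext (aux_exec_mono M H φ (Nat.succ_le_of_lt h)) h4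
              rw [Nat.succ_eq_add_one, aux_exec_next M H φ m hQ, g3] at this
              simp [updateSub] at this
            · exact heq (by rw [h])
            · have := aux_none_of_subext (aux_exec_mono M H φ (Nat.succ_le_of_lt h)) hn
              rw [Nat.succ_eq_add_one, aux_exec_next M H φ n h2, h3] at this
              simp [updateSub] at this
          · have : updateSub (execAux M H φ m) e (φ e) = execAux M H φ m := by
              funext e'
              unfold updateSub
              split_ifs with h
              · rw [h, hn]
              · rfl
            simp [Fm, this]
        · have h5 : subext (updateSub (execAux M H φ m) e (φ e)) (toSub φ) := by
            intro e' o h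
            unfold updateSub at h
            split_ifs at h with h6
            · rw [h6]; exact h
            · exact aux_exec_toSub M H φ m e' o h
          have := M.f_mono _ _ h5
          rw [M.f_cover] at this
          unfold Fm
          linarith
    · simp
  · refine le_trans (Finset.sum_nonpos ?_) hF
    intro ψ' _
    split_ifs with hc
    swap
    · exact le_refl _
    obtain ⟨g1, ⟨m, rfl⟩, -, g3⟩ := hc
    by_cases hQ : M.f (execAux M H φ m) < M.Q
    · rcases aux_exec_none_or M H φ m e with hn | hn
      · exact absurd ⟨m, g1, hQ, g3, hn⟩ hex
      · have : updateSub (execAux M H φ m) e (φ e) = execAux M H φ m := by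
          funext e'
          unfold updateSub
          split_ifs with h
          · rw [h, hn]
          · rfl
        simp [Fm, this]
    · have h5 : subext (updateSub (execAux M H φ m) e (φ e)) (toSub φ) := by
        intro e' o h
        unfold updateSub at h
        split_ifs at h with h6
        · rw [h6]; exact h
        · exact aux_exec_toSub M H φ m e' o h
      have := M.f_mono _ _ h5
      rw [M.f_cover] at this
      unfold Fm
      linarith

/-- Swapping the states of `e` between two realizations preserves the product of masses. -/
lemma aux_swap (φ φ' : E → O) (e : E) :
    M.p (Function.update φ e (φ' e)) * M.p (Function.update φ' e (φ e)) = M.p φ * M.p φ' := by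
  have key : ∀ φ : E → O, M.p φ = (∑ χ : E → O, if χ e = φ e then M.p χ else 0) *
      ∏ e' ∈ Finset.univ.erase e, ∑ χ : E → O, if χ e' = φ e' then M.p χ else 0 := by
    intro φ
    rw [M.indep φ]
    exact (Finset.mul_prod_erase Finset.univ
      (fun e' => ∑ χ : E → O, if χ e' = φ e' then M.p χ else 0) (Finset.mem_univ e)).symm
  have key2 : ∀ (φ : E → O) (o : O),
      M.p (Function.update φ e o) = (∑ χ : E → O, if χ e = o then M.p χ else 0) *
      ∏ e' ∈ Finset.univ.erase e, ∑ χ : E → O, if χ e' = φ e' then M.p χ else 0 := by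
    intro φ o
    rw [key (Function.update φ e o), Function.update_self]
    congr 1
    apply Finset.prod_congr rfl
    intro e' he'
    rw [Function.update_of_ne (Finset.ne_of_mem_erase he')]
  rw [key2, key2]
  conv_rhs => rw [key φ, key φ']
  ring

lemma aux_indep (e : E) (g : O → ℝ) (A : (E → O) → Prop)
    (hA : ∀ φ o, A φ ↔ A (Function.update φ e o)) :
    (∑ φ : E → O, if A φ then M.p φ * g (φ e) else 0) =
      (∑ φ : E → O, M.p φ * g (φ e)) * Pr M A := by
  have h1 : (∑ φ : E → O, M.p φ * g (φ e)) * Pr M A =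
      ∑ x : (E → O) × (E → O), (if A x.1 then M.p x.1 * M.p x.2 * g (x.2 e) else 0) := by
    rw [Fintype.sum_prod_type, mul_comm, Pr, Finset.sum_mul]
    apply Finset.sum_congr rfl
    intro φ _
    split_ifs
    · rw [Finset.mul_sum]
      apply Finset.sum_congr rfl
      intro φ' _
      ring
    · simp
  have h2 : (∑ φ : E → O, if A φ then M.p φ * g (φ e) else 0) =
      ∑ x : (E → O) × (E → O), (if A x.1 then M.p x.1 * M.p x.2 * g (x.1 e) else 0) := by
    rw [Fintype.sum_prod_type]
    apply Finset.sum_congr rfl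
    intro φ _
    split_ifs
    · calc M.p φ * g (φ e) = (M.p φ * g (φ e)) * ∑ φ' : E → O, M.p φ' := by
            rw [M.p_sum, mul_one]
        _ = _ := by
            rw [Finset.mul_sum]
            apply Finset.sum_congr rfl
            intro φ' _
            ring
    · simp
  rw [h1, h2]
  have hinv : Function.Involutive (fun x : (E → O) × (E → O) =>
      (Function.update x.1 e (x.2 e), Function.update x.2 e (x.1 e))) := by
    intro x
    simp
  refine Fintype.sum_equiv hinv.toPerm _ _ ?_
  rintro ⟨φ, φ'⟩
  simp only [Function.Involutive.coe_toPerm, Function.update_self, aux_swap, ← hA]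

/-- A visited node with zero expected greedy marginal has probability zero. -/
lemma aux_degenerate (α : ℝ) (σ : Sub E O → E) (hσ : IsGreedy M α σ) (ψ : Sub E O)
    (hf : M.f ψ < M.Q) (h0 : Ex M (Fm M ψ (σ ψ)) = 0) (φ : E → O) (hφ : subext ψ (toSub φ)) :
    M.p φ = 0 := by
  by_contra hp
  have hpp : 0 < M.p φ := lt_of_le_of_ne (M.p_nonneg φ) (Ne.symm hp)
  have hz : ∀ e, ψ e = none → M.f (updateSub ψ e (φ e)) - M.f ψ ≤ 0 := by
    intro e he
    have h1 := hσ.2 ψ hf e he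
    rw [h0, mul_zero] at h1
    have h2 : Ex M (Fm M ψ e) ≤ 0 := by
      by_contra hc
      have := mul_pos (M.c_pos (σ ψ)) (not_le.mp hc)
      linarith
    have h3 : M.p φ * Fm M ψ e φ ≤ Ex M (Fm M ψ e) :=
      Finset.single_le_sum (f := fun φ => M.p φ * Fm M ψ e φ)
        (fun φ _ => mul_nonneg (M.p_nonneg φ) (aux_Fm_nonneg M ψ e φ he)) (Finset.mem_univ φ)
    by_contra hc
    have := mul_pos hpp (not_le.mp hc)
    unfold Fm at h3 h2
    linarith
  have hS : ∀ S : Finset E,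
      M.f (fun e => if e ∈ S then some (φ e) else ψ e) ≤ M.f ψ := by
    intro S
    induction S using Finset.induction_on with
    | empty => simp
    | insert a S ha ih =>
      have heq : (fun e => if e ∈ insert a S then some (φ e) else ψ e) =
          updateSub (fun e => if e ∈ S then some (φ e) else ψ e) a (φ a) := by
        funext e
        unfold updateSub
        by_cases h : e = a
        · simp [h]
        · simp [h]
      have hsub : subext ψ (fun e => if e ∈ S then some (φ e) else ψ e) := by
        intro e o h
        dsimp only
        split_ifs
        · exact hφ e o h
        · exact h
      rcases hψ : ψ a with _ | o
      · have h1 := M.f_submod _ _ a (φ a) hsub (by simp [ha, hψ])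
        rw [heq]
        have := hz a hψ
        linarith
      · have h2 : o = φ a := by
          have := hφ a o hψ
          simp only [toSub, Option.some.injEq] at this
          exact this.symm
        have : (fun e => if e ∈ insert a S then some (φ e) else ψ e) =
            (fun e => if e ∈ S then some (φ e) else ψ e) := by
          funext e
          by_cases h : e = a
          · subst h; simp [ha, hψ, h2]
          · simp [h]
        rw [this]
        exact ih
  have h4 := hS Finset.univ
  have h5 : (fun e => if e ∈ (Finset.univ : Finset E) then some (φ e) else ψ e) = toSub φ := by
    funext e; simp [toSub]
  rw [h5, M.f_cover] at h4
  linarith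

lemma aux_price_nonneg (ψ : Sub E O) (e : E) (h : ψ e = none) : 0 ≤ price M ψ e :=
  div_nonneg (M.c_pos e).le (aux_Ex_Fm_nonneg M ψ e h)

/-- For `ψ ∈ N(σ)`, a marker index `i` with `Pr[ψ ↝ i] > 0`, and
`e ∉ dom ψ`, conditioned additionally on the event `B(e)` that `e` is selected both by
`σ` and by `π*`: `α·E[μ(e) | B(e) ∧ ψ ↝ i] ≥ υ_ψ·E[δ⁺_ψ(e) | B(e) ∧ ψ ↝ i]`. -/
theorem mu_delta_bound_on_B
    (M : Problem E O) (α : ℝ) (hα : 1 ≤ α)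
    (σ : Sub E O → E) (hσ : IsGreedy M α σ)
    (πs : Sub E O → E) (hπs : IsOptimal M πs)
    (t : ℕ) (ρ : ℕ → Sub E O)
    (hcard : t = (Nnodes M σ).card)
    (hρmem : ∀ i, 1 ≤ i → i ≤ t → ρ i ∈ Nnodes M σ)
    (hρinj : ∀ i j, 1 ≤ i → i ≤ t → 1 ≤ j → j ≤ t → ρ i = ρ j → i = j)
    (hρmono : ∀ i j, 1 ≤ i → i ≤ j → j ≤ t → M.f (ρ i) ≤ M.f (ρ j))
    (i : ℕ) (hi1 : 1 ≤ i) (hit : i ≤ t)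
    (ψ : Sub E O) (hmem : ψ ∈ Nnodes M σ)
    (hpos : 0 < Pr M (leadsTo M σ (M.f (ρ i)) ψ))
    (e : E) (he : ψ e = none) :
    price M ψ (σ ψ) *
        cEx M (deltaPlus M σ πs ψ e)
          (fun φ => (e ∈ Ssel M σ φ ∧ e ∈ Ssel M πs φ) ∧ leadsTo M σ (M.f (ρ i)) ψ φ)
      ≤ α * cEx M (mu M σ πs e)
          (fun φ => (e ∈ Ssel M σ φ ∧ e ∈ Ssel M πs φ) ∧ leadsTo M σ (M.f (ρ i)) ψ φ) := by
  have hψf : M.f ψ < M.Q := by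
    simp only [Nnodes, Finset.mem_filter] at hmem
    exact hmem.2.1
  have hψn : ψ (σ ψ) = none := hσ.1 ψ hψf
  set b := M.f (ρ i)
  obtain ⟨A, hAdef⟩ : ∃ A : (E → O) → Prop, A =
    fun φ => (e ∈ Ssel M σ φ ∧ e ∈ Ssel M πs φ) ∧ leadsTo M σ b ψ φ := ⟨_, rfl⟩
  rw [← hAdef]
  have hAspec : ∀ φ, A φ → (e ∈ Ssel M σ φ ∧ e ∈ Ssel M πs φ) ∧ leadsTo M σ b ψ φ := by
    intro φ hφ
    rwa [hAdef] at hφ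
  have hPr : ∀ B : (E → O) → Prop, 0 ≤ Pr M B := fun B =>
    Finset.sum_nonneg fun φ _ => by split_ifs; exacts [M.p_nonneg φ, le_refl _]
  have hα0 : 0 ≤ α := le_trans zero_le_one hα
  have hpr : 0 ≤ price M ψ (σ ψ) := aux_price_nonneg M ψ _ hψn
  suffices hmain : price M ψ (σ ψ) *
      (∑ φ : E → O, if A φ then M.p φ * deltaPlus M σ πs ψ e φ else 0) ≤
      α * (∑ φ : E → O, if A φ then M.p φ * mu M σ πs e φ else 0) by
    unfold cEx
    rw [← mul_div_assoc, ← mul_div_assoc]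
    exact div_le_div_of_nonneg_right hmain (hPr A)
  have hdelta : (∑ φ : E → O, if A φ then M.p φ * deltaPlus M σ πs ψ e φ else 0) ≤
      ∑ φ : E → O, if A φ then M.p φ * Fm M ψ e φ else 0 := by
    apply Finset.sum_le_sum
    intro φ _
    split_ifs
    · exact mul_le_mul_of_nonneg_left (aux_delta_le M σ πs ψ e φ he) (M.p_nonneg φ)
    · exact le_refl _
  refine (mul_le_mul_of_nonneg_left hdelta hpr).trans ?_
  have hmu : ∀ φ, A φ → mu M σ πs e φ = ∑ ψ' : Sub E O,
        if visits M σ φ ψ' ∧ M.f ψ' < M.Q ∧ σ ψ' = e then price M ψ' e * Fm M ψ' e φ else 0 := by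
    intro φ hφ
    unfold mu
    rw [if_pos (hAspec φ hφ).1.2, if_pos (hAspec φ hφ).1.1]
  by_cases heσ : σ ψ = e
  · rw [Finset.mul_sum, Finset.mul_sum]
    apply Finset.sum_le_sum
    intro φ _
    split_ifs with hAφ
    swap
    · simp
    have h1 : price M ψ e * Fm M ψ e φ ≤ mu M σ πs e φ := by
      rw [hmu φ hAφ]
      have h2 := Finset.single_le_sum (f := fun ψ' : Sub E O =>
        if visits M σ φ ψ' ∧ M.f ψ' < M.Q ∧ σ ψ' = e then price M ψ' e * Fm M ψ' e φ else 0)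
        (s := Finset.univ) (fun ψ' _ => by
          split_ifs with hc
          · have : ψ' e = none := by
              have := hσ.1 ψ' hc.2.1
              rwa [hc.2.2] at this
            exact mul_nonneg (aux_price_nonneg M ψ' e this) (aux_Fm_nonneg M ψ' e φ this)
          · exact le_refl _) (Finset.mem_univ ψ)
      rwa [if_pos ⟨(hAspec φ hAφ).2.1, hψf, heσ⟩] at h2
    have h0 : 0 ≤ price M ψ e * Fm M ψ e φ := by
      rw [heσ] at hpr
      exact mul_nonneg hpr (aux_Fm_nonneg M ψ e φ he)
    have h2 : mu M σ πs e φ ≤ α * mu M σ πs e φ := le_mul_of_one_le_left (h0.trans h1) hα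
    rw [heσ]
    calc price M ψ e * (M.p φ * Fm M ψ e φ) = M.p φ * (price M ψ e * Fm M ψ e φ) := by ring
      _ ≤ M.p φ * (α * mu M σ πs e φ) :=
          mul_le_mul_of_nonneg_left (h1.trans h2) (M.p_nonneg φ)
      _ = _ := by ring
  · -- the event `A` does not depend on the state of `e`
    have hupd : ∀ (φ : E → O) (o : O), ∀ e', e' ≠ e → Function.update φ e o e' = φ e' :=
      fun φ o e' h => Function.update_of_ne h _ _
    have hA : ∀ φ o, A φ ↔ A (Function.update φ e o) := by
      intro φ o
      simp only [hAdef]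
      rw [aux_sel_congr M σ φ _ e (hupd φ o), aux_sel_congr M πs φ _ e (hupd φ o),
        aux_leads_iff M σ b ψ φ hψf hψn, aux_leads_iff M σ b ψ _ hψf hψn,
        aux_visits_congr M σ φ _ e (hupd φ o) ψ he, hupd φ o _ heσ]
    have hL : price M ψ (σ ψ) * (∑ φ : E → O, if A φ then M.p φ * Fm M ψ e φ else 0) ≤
        α * M.c e * Pr M A := by
      have h1 := aux_indep M e (fun o => M.f (updateSub ψ e o) - M.f ψ) A hA
      have h2 : (∑ φ : E → O, if A φ then M.p φ * Fm M ψ e φ else 0) =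
        Ex M (Fm M ψ e) * Pr M A := h1
      rw [h2, ← mul_assoc]
      apply mul_le_mul_of_nonneg_right _ (hPr A)
      unfold price
      rcases (aux_Ex_Fm_nonneg M ψ _ hψn).eq_or_lt with h3 | h3
      · rw [← h3, div_zero, zero_mul]
        exact mul_nonneg hα0 (M.c_pos e).le
      · rw [div_mul_eq_mul_div, div_le_iff₀ h3]
        exact hσ.2 ψ hψf e he
    refine hL.trans ?_
    rw [mul_assoc]
    refine mul_le_mul_of_nonneg_left ?_ hα0
    -- rewrite the revenue as a sum over nodes
    obtain ⟨V, hV⟩ : ∃ V : Sub E O → (E → O) → Prop, ∀ ψ' φ, V ψ' φ ↔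
        (A φ ∧ visits M σ φ ψ' ∧ M.f ψ' < M.Q ∧ σ ψ' = e) := ⟨_, fun _ _ => Iff.rfl⟩
    have hsum : (∑ φ : E → O, if A φ then M.p φ * mu M σ πs e φ else 0) =
        ∑ ψ' : Sub E O, ∑ φ : E → O,
          if V ψ' φ
          then M.p φ * (price M ψ' e * Fm M ψ' e φ) else 0 := by
      rw [Finset.sum_comm]
      apply Finset.sum_congr rfl
      intro φ _
      by_cases hAφ : A φ
      · rw [if_pos hAφ, hmu φ hAφ, Finset.mul_sum]
        apply Finset.sum_congr rfl
        intro ψ' _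
        simp only [hV, hAφ, true_and, mul_ite, mul_zero]
      · simp only [hV, hAφ, false_and, if_false, Finset.sum_const_zero]
    have hnode : ∀ ψ' : Sub E O,
        M.c e * Pr M (V ψ') ≤
        ∑ φ : E → O, if V ψ' φ
          then M.p φ * (price M ψ' e * Fm M ψ' e φ) else 0 := by
      intro ψ'
      by_cases hc : M.f ψ' < M.Q ∧ σ ψ' = e
      swap
      · simp [Pr, hV, hc]
      have hn : ψ' e = none := by
        have := hσ.1 ψ' hc.1
        rwa [hc.2] at this
      have h1 := aux_indep M e (fun o => price M ψ' e * (M.f (updateSub ψ' e o) - M.f ψ'))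
        (V ψ') (by
          intro φ o
          rw [hV, hV, hA φ o, aux_visits_congr M σ φ _ e (hupd φ o) ψ' hn])
      have h2 : (∑ φ : E → O, M.p φ * (price M ψ' e * (M.f (updateSub ψ' e (φ e)) - M.f ψ'))) =
          price M ψ' e * Ex M (Fm M ψ' e) := by
        unfold Ex Fm
        rw [Finset.mul_sum]
        apply Finset.sum_congr rfl
        intro φ _
        ring
      rw [h2] at h1
      refine le_trans ?_ (le_of_eq h1.symm)
      rcases (aux_Ex_Fm_nonneg M ψ' e hn).eq_or_lt with h3 | h3
      · have h4 : Pr M (V ψ') = 0 := by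
          apply Finset.sum_eq_zero
          intro φ _
          split_ifs with h5
          · obtain ⟨n, hn'⟩ := ((hV _ _).mp h5).2.1
            refine aux_degenerate M α σ hσ ψ' hc.1 (by rw [hc.2]; exact h3.symm) φ ?_
            rw [← hn']
            exact aux_exec_toSub M σ φ n
          · rfl
        rw [h4]; simp
      · apply le_of_eq
        unfold price
        rw [div_mul_cancel₀ _ h3.ne']
    rw [hsum]
    refine le_trans ?_ (Finset.sum_le_sum fun ψ' _ => hnode ψ')
    rw [← Finset.mul_sum]
    refine mul_le_mul_of_nonneg_left ?_ (M.c_pos e).le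
    unfold Pr
    rw [Finset.sum_comm]
    apply Finset.sum_le_sum
    intro φ _
    split_ifs with hAφ
    · have hsel := (aux_mem_Ssel M σ φ e).mp (hAspec φ hAφ).1.1
      obtain ⟨m, hm1, hm2⟩ := aux_exists_sel M σ φ e _ hsel
      have h2 := Finset.single_le_sum (f := fun ψ' : Sub E O =>
        if V ψ' φ then M.p φ else 0)
        (s := Finset.univ) (fun ψ' _ => by
          split_ifs
          · exact M.p_nonneg φ
          · exact le_refl _) (Finset.mem_univ (execAux M σ φ m))
      rwa [if_pos ((hV _ _).mpr ⟨hAφ, ⟨m, rfl⟩, hm1, hm2⟩)] at h2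
    · apply Finset.sum_nonneg
      intro ψ' _
      split_ifs
      · exact M.p_nonneg φ
      · exact le_refl _

end
end SSC
end

section
/- Let ψ ∈ N(σ), e ∈ E \ dom(ψ), and let ψ_g be any subrealization at which σ selects e (ψ_g ∈ σ_{-1}[e]) with ψ ⊂ ψ_g. Then, conditioned on the event B(e) that e is selected by both σ and π* and on σ visiting ψ_g, the expected revenue of e equals its cost: E[μ(e) | B(e) ∧ ψ_g ⊂ Ψ(σ)] = c(e). -/
/-!
Common framework for the Stochastic Submodular Cover problem
(Hellerstein–Kletenik–Parthasarathy, "A Tight Bound for Stochastic Submodular Cover").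
-/

namespace SSC

open Finset
open scoped Classical

noncomputable section

variable {E O : Type*}

variable [Fintype E] [DecidableEq E] [Fintype O] [DecidableEq O]

variable (M : Problem E O)

/-! ### Helper lemmas -/

/-- `φ` is consistent with `ψ`. -/
def Cons (ψ : Sub E O) (φ : E → O) : Prop := ∀ x o, ψ x = some o → φ x = o

theorem subext_trans_aux {a b c : Sub E O} (h : subext a b) (h' : subext b c) : subext a c :=
  fun x o hx => h' x o (h x o hx)

theorem exec_cons (π : Sub E O → E) (φ : E → O) (n : ℕ) : Cons (execAux M π φ n) φ := by
  induction n with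
  | zero => intro x o h; simp [execAux] at h
  | succ n ih =>
    intro x o h
    simp only [execAux, stepPol] at h
    split_ifs at h
    · simp only [updateSub] at h
      split_ifs at h with hx
      · subst hx; simpa using h
      · exact ih x o h
    · exact ih x o h

theorem exec_step (π : Sub E O → E) (hπ : IsPolicy M π) (φ : E → O) (n : ℕ) :
    subext (execAux M π φ n) (execAux M π φ (n+1)) := by
  intro x o h
  simp only [execAux, stepPol]
  split_ifs with hf
  · simp only [updateSub]
    split_ifs with hx
    · subst hx
      rw [hπ _ hf] at h
      simp at h
    · exact h
  · exact h

theorem exec_mono (π : Sub E O → E) (hπ : IsPolicy M π) (φ : E → O) {n m : ℕ} (h : n ≤ m) :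
    subext (execAux M π φ n) (execAux M π φ m) := by
  induction m, h using Nat.le_induction with
  | base => exact fun x o h => h
  | succ m _ ih => exact subext_trans_aux ih (exec_step M π hπ φ m)

theorem exec_sel (π : Sub E O → E) (φ : E → O) (n : ℕ) (hf : M.f (execAux M π φ n) < M.Q) :
    execAux M π φ (n+1) (π (execAux M π φ n)) = some (φ (π (execAux M π φ n))) := by
  simp [execAux, stepPol, hf, updateSub]

theorem exec_card (π : Sub E O → E) (hπ : IsPolicy M π) (φ : E → O) (n : ℕ)
    (hf : M.f (execAux M π φ n) < M.Q) :
    (Finset.univ.filter fun x => execAux M π φ n x ≠ none).card = n := by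
  induction n with
  | zero => simp [execAux]
  | succ n ih =>
    have hf' : M.f (execAux M π φ n) < M.Q :=
      lt_of_le_of_lt (M.f_mono _ _ (exec_step M π hπ φ n)) hf
    have h1 := ih hf'
    have h2 : (Finset.univ.filter fun x => execAux M π φ (n+1) x ≠ none)
        = insert (π (execAux M π φ n))
          (Finset.univ.filter fun x => execAux M π φ n x ≠ none) := by
      ext x
      simp only [execAux, stepPol, hf', if_true, updateSub, Finset.mem_filter,
        Finset.mem_univ, true_and, Finset.mem_insert]
      by_cases hx : x = π (execAux M π φ n) <;> simp [hx]
    rw [h2, Finset.card_insert_of_notMem, h1]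
    simp [hπ _ hf']

theorem exec_lt (π : Sub E O → E) (hπ : IsPolicy M π) (φ : E → O) (n : ℕ)
    (hf : M.f (execAux M π φ n) < M.Q) : n < Fintype.card E := by
  have h := exec_card M π hπ φ n hf
  rw [← h, ← Finset.card_univ]
  apply Finset.card_lt_card
  rw [Finset.ssubset_univ_iff]
  intro h2
  have := Finset.mem_univ (π (execAux M π φ n))
  rw [← h2] at this
  simp [hπ _ hf] at this

theorem exec_congr (π : Sub E O → E) (hπ : IsPolicy M π) (φ φ' : E → O) (n : ℕ)
    (h : Cons (execAux M π φ' n) φ) : execAux M π φ n = execAux M π φ' n := by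
  induction n with
  | zero => rfl
  | succ n ih =>
    have h1 := ih (fun x o hx => h x o (exec_step M π hπ φ' n x o hx))
    by_cases hf : M.f (execAux M π φ' n) < M.Q
    · have h2 := h _ _ (exec_sel M π φ' n hf)
      simp only [execAux, h1, stepPol, h2]
    · simp only [execAux, h1, stepPol, hf, if_false]

theorem mem_Ssel (π : Sub E O → E) (φ : E → O) (e : E) :
    e ∈ Ssel M π φ ↔ cover M π φ e ≠ none := by
  unfold Ssel
  rw [Finset.mem_filter]
  exact ⟨fun h => h.2, fun h => ⟨Finset.mem_univ _, h⟩⟩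

theorem Ssel_update (π : Sub E O → E) (hπ : IsPolicy M π) (φ : E → O) (e : E) (o : O)
    (h : e ∈ Ssel M π φ) : e ∈ Ssel M π (Function.update φ e o) := by
  by_contra hn
  rw [mem_Ssel] at h hn
  rw [not_not] at hn
  apply h
  unfold cover at hn ⊢
  rw [exec_congr M π hπ φ (Function.update φ e o) _ ?_]
  · exact hn
  · intro x o' hx
    have hxe : x ≠ e := by
      rintro rfl
      rw [hn] at hx
      simp at hx
    have := exec_cons M π (Function.update φ e o) _ x o' hx
    rwa [Function.update_of_ne hxe] at this

theorem Ssel_update_iff (π : Sub E O → E) (hπ : IsPolicy M π) (φ : E → O) (e : E) (o : O) :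
    e ∈ Ssel M π (Function.update φ e o) ↔ e ∈ Ssel M π φ := by
  constructor
  · intro h
    have := Ssel_update M π hπ _ e (φ e) h
    simpa using this
  · exact Ssel_update M π hπ φ e o

theorem p_swap (e : E) (φ φ' : E → O) :
    M.p (Function.update φ e (φ' e)) * M.p (Function.update φ' e (φ e)) = M.p φ * M.p φ' := by
  rw [M.indep φ, M.indep φ', M.indep (Function.update φ e (φ' e)),
    M.indep (Function.update φ' e (φ e)), ← Finset.prod_mul_distrib, ← Finset.prod_mul_distrib]
  refine Finset.prod_congr rfl fun x _ => ?_
  by_cases hx : x = e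
  · subst hx
    simp only [Function.update_self]
    exact mul_comm _ _
  · simp only [Function.update_of_ne hx]

/-- The involution exchanging the state of `e` in a pair of realizations. -/
def swapAt (e : E) (q : (E → O) × (E → O)) : (E → O) × (E → O) :=
  (Function.update q.1 e (q.2 e), Function.update q.2 e (q.1 e))

theorem indep_event (e : E) (A : (E → O) → Prop)
    (hA : ∀ φ o, A (Function.update φ e o) ↔ A φ) (g : O → ℝ) :
    (∑ φ : E → O, if A φ then M.p φ * g (φ e) else 0)
      = Pr M A * Ex M (fun φ => g (φ e)) := by
  have h1 : (∑ φ : E → O, if A φ then M.p φ * g (φ e) else 0)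
      = ∑ q : (E → O) × (E → O), if A q.1 then M.p q.1 * M.p q.2 * g (q.1 e) else 0 := by
    rw [Fintype.sum_prod_type]
    refine Finset.sum_congr rfl fun φ _ => ?_
    by_cases h : A φ
    · simp only [h, if_true]
      rw [← Finset.sum_mul, ← Finset.mul_sum, M.p_sum, mul_one]
    · simp [h]
  have h2 : Pr M A * Ex M (fun φ => g (φ e))
      = ∑ q : (E → O) × (E → O), if A q.1 then M.p q.1 * M.p q.2 * g (q.2 e) else 0 := by
    rw [Fintype.sum_prod_type, Pr, Ex, Finset.sum_mul]
    refine Finset.sum_congr rfl fun φ _ => ?_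
    by_cases h : A φ
    · simp only [h, if_true, Finset.mul_sum, mul_assoc]
    · simp [h]
  rw [h1, h2]
  have hinv : Function.Involutive (swapAt (E := E) (O := O) e) := by
    intro q
    simp [swapAt]
  refine Fintype.sum_equiv hinv.toPerm _ _ fun q => ?_
  simp only [Function.Involutive.coe_toPerm, swapAt, hA, p_swap, Function.update_self]

theorem exists_pos (A : (E → O) → Prop) (h : 0 < Pr M A) : ∃ φ, A φ ∧ 0 < M.p φ := by
  obtain ⟨φ, -, h⟩ := Finset.exists_lt_of_sum_lt (f := fun _ => (0:ℝ)) (s := Finset.univ)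
    (g := fun φ => if A φ then M.p φ else 0) (by simpa [Pr] using h)
  by_cases hA : A φ
  · exact ⟨φ, hA, by simpa [hA] using h⟩
  · simp [hA] at h

theorem subext_update (ψ : Sub E O) (e : E) (o : O) (h : ψ e = none) :
    subext ψ (updateSub ψ e o) := by
  intro x o' hx
  simp only [updateSub]
  split_ifs with hxe
  · subst hxe; simp [h] at hx
  · exact hx

theorem Fm_nonneg (ψ : Sub E O) (e : E) (h : ψ e = none) (φ : E → O) : 0 ≤ Fm M ψ e φ :=
  sub_nonneg.2 (M.f_mono _ _ (subext_update ψ e _ h))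

theorem Ex_pos (α : ℝ) (σ : Sub E O → E) (hσ : IsGreedy M α σ) (ψ : Sub E O)
    (hf : M.f ψ < M.Q) (φ : E → O) (hφ : Cons ψ φ) (hp : 0 < M.p φ) :
    Ex M (Fm M ψ (σ ψ)) ≠ 0 := by
  intro h0
  have hz : ∀ x, ψ x = none → Fm M ψ x φ = 0 := by
    intro x hx
    have h1 := hσ.2 ψ hf x hx
    rw [h0, mul_zero] at h1
    have hnn : ∀ φ' ∈ Finset.univ, 0 ≤ M.p φ' * Fm M ψ x φ' := fun φ' _ =>
      mul_nonneg (M.p_nonneg _) (Fm_nonneg M ψ x hx φ')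
    have h3 : Ex M (Fm M ψ x) = 0 :=
      le_antisymm (nonpos_of_mul_nonpos_right h1 (M.c_pos _)) (Finset.sum_nonneg hnn)
    have h4 := (Finset.sum_eq_zero_iff_of_nonneg hnn).1 h3 φ (Finset.mem_univ _)
    exact (mul_eq_zero.1 h4).resolve_left hp.ne'
  have key : ∀ S : Finset E, M.f (fun x => if x ∈ S then some (φ x) else ψ x) ≤ M.f ψ := by
    intro S
    induction S using Finset.induction_on with
    | empty => simp
    | insert a S ha ih =>
      have heq : (fun x => if x ∈ insert a S then some (φ x) else ψ x)
          = updateSub (fun x => if x ∈ S then some (φ x) else ψ x) a (φ a) := by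
        funext x
        by_cases hx : x = a
        · subst hx; simp [updateSub]
        · simp [updateSub, hx]
      cases hψ : ψ a with
      | none =>
        have h := M.f_submod ψ (fun x => if x ∈ S then some (φ x) else ψ x) a (φ a)
          (by
            intro x o hx
            by_cases hS : x ∈ S
            · simp [hS, hφ x o hx]
            · simpa [hS] using hx) (by simp [ha, hψ])
        have h2 := hz a hψ
        simp only [Fm] at h2
        rw [heq]
        linarith
      | some o =>
        have h3 : (fun x => if x ∈ insert a S then some (φ x) else ψ x)
            = (fun x => if x ∈ S then some (φ x) else ψ x) := by
          funext x
          by_cases hx : x = a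
          · subst hx; simp [ha, hψ, hφ x o hψ]
          · simp [hx]
        rw [h3]; exact ih
  have h5 := key Finset.univ
  simp only [Finset.mem_univ, if_true] at h5
  have h6 := M.f_cover φ
  change M.f (fun x => some (φ x)) = M.Q at h6
  linarith

/-- For `ψ ∈ N(σ)`, `e ∉ dom ψ`, and any node `ψg` of the greedy tree at
which `σ` selects `e` with `ψ ⊂ ψg`, conditioned on `e` being selected by both `σ` and
`π*` and on `σ` visiting `ψg` (i.e. `ψg ⊂ Ψ(σ)`), the expected revenue of `e` equals its
cost: `E[μ(e) | B(e) ∧ ψg ⊂ Ψ(σ)] = c(e)`. -/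
theorem revenue_eq_cost_on_G_node
    (M : Problem E O) (α : ℝ) (hα : 1 ≤ α)
    (σ : Sub E O → E) (hσ : IsGreedy M α σ)
    (πs : Sub E O → E) (hπs : IsOptimal M πs)
    (ψ : Sub E O) (hmem : ψ ∈ Nnodes M σ)
    (e : E) (he : ψ e = none)
    (ψg : Sub E O) (hgmem : ψg ∈ Nnodes M σ) (hgsel : σ ψg = e) (hψψg : ssubext ψ ψg)
    (hpos : 0 < Pr M fun φ =>
      (e ∈ Ssel M σ φ ∧ e ∈ Ssel M πs φ) ∧ ssubext ψg (cover M σ φ)) :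
    cEx M (mu M σ πs e)
        (fun φ => (e ∈ Ssel M σ φ ∧ e ∈ Ssel M πs φ) ∧ ssubext ψg (cover M σ φ))
      = M.c e := by
  simp only [Nnodes, Finset.mem_filter, Finset.mem_univ, true_and] at hgmem
  obtain ⟨hfg, hvg⟩ := hgmem
  have hpol := hσ.1
  obtain ⟨φ0, ⟨n, hn⟩, hp0⟩ := exists_pos M _ hvg
  have hge : ψg e = none := by rw [← hgsel]; exact hpol _ hfg
  have hcons0 : Cons ψg φ0 := by rw [← hn]; exact exec_cons M σ φ0 n
  have hne : Ex M (Fm M ψg e) ≠ 0 := by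
    have := Ex_pos M α σ hσ ψg hfg φ0 hcons0 hp0
    rwa [hgsel] at this
  have hvis : ∀ φ, Cons ψg φ → execAux M σ φ n = ψg := by
    intro φ hφ
    rw [exec_congr M σ hpol φ φ0 n (by rwa [hn]), hn]
  have hA : ∀ φ, ((e ∈ Ssel M σ φ ∧ e ∈ Ssel M πs φ) ∧ ssubext ψg (cover M σ φ))
      ↔ (Cons ψg φ ∧ e ∈ Ssel M πs φ) := by
    intro φ
    constructor
    · rintro ⟨⟨-, h⟩, h2, -⟩
      exact ⟨fun x o hx => exec_cons M σ φ _ x o (h2 x o hx), h⟩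
    · rintro ⟨hc, h⟩
      have hv := hvis φ hc
      have hlt := exec_lt M σ hpol φ n (by rwa [hv])
      have hs := exec_sel M σ φ n (by rwa [hv])
      rw [hv, hgsel] at hs
      have hcov : cover M σ φ e = some (φ e) :=
        exec_mono M σ hpol φ (Nat.succ_le_of_lt hlt) _ _ hs
      refine ⟨⟨by rw [mem_Ssel, hcov]; simp, h⟩, ?_, ?_⟩
      · have := exec_mono M σ hpol φ hlt.le
        rwa [hv] at this
      · intro heq
        rw [heq, hcov] at hge
        simp at hge
  have hmu : ∀ φ, ((e ∈ Ssel M σ φ ∧ e ∈ Ssel M πs φ) ∧ ssubext ψg (cover M σ φ)) →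
      mu M σ πs e φ = price M ψg e * Fm M ψg e φ := by
    intro φ h
    have hc := ((hA φ).1 h).1
    have hv := hvis φ hc
    simp only [mu, h.1.1, h.1.2, if_true]
    rw [Finset.sum_eq_single ψg]
    · rw [if_pos ⟨⟨n, hv⟩, hfg, hgsel⟩]
    · intro ψ' _ hne'
      rw [if_neg]
      rintro ⟨⟨m, hm⟩, hf', hs'⟩
      rcases lt_trichotomy m n with hmn | hmn | hmn
      · have h1 := exec_sel M σ φ m (by rwa [hm])
        rw [hm, hs'] at h1
        have h2 := exec_mono M σ hpol φ (Nat.succ_le_of_lt hmn) _ _ h1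
        rw [hv, hge] at h2
        simp at h2
      · subst hmn
        exact hne' (hm.symm.trans hv)
      · have h1 := exec_sel M σ φ n (by rwa [hv])
        rw [hv, hgsel] at h1
        have h2 := exec_mono M σ hpol φ (Nat.succ_le_of_lt hmn) _ _ h1
        have h3 := hpol ψ' hf'
        rw [hs'] at h3
        rw [hm, h3] at h2
        simp at h2
    · simp
  have hinv : ∀ φ o, ((e ∈ Ssel M σ (Function.update φ e o) ∧
        e ∈ Ssel M πs (Function.update φ e o)) ∧
        ssubext ψg (cover M σ (Function.update φ e o)))
      ↔ ((e ∈ Ssel M σ φ ∧ e ∈ Ssel M πs φ) ∧ ssubext ψg (cover M σ φ)) := by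
    intro φ o
    rw [hA, hA, Ssel_update_iff M πs hπs.1]
    have : Cons ψg (Function.update φ e o) ↔ Cons ψg φ := by
      refine forall_congr' fun x => forall_congr' fun o' => ?_
      by_cases hx : x = e
      · subst hx; simp [hge]
      · rw [Function.update_of_ne hx]
    rw [this]
  have hind := indep_event M e
    (fun φ => (e ∈ Ssel M σ φ ∧ e ∈ Ssel M πs φ) ∧ ssubext ψg (cover M σ φ)) hinv
    (fun o => price M ψg e * (M.f (updateSub ψg e o) - M.f ψg))
  have hEx : Ex M (fun φ => price M ψg e * (M.f (updateSub ψg e (φ e)) - M.f ψg)) = M.c e := by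
    have : Ex M (fun φ => price M ψg e * (M.f (updateSub ψg e (φ e)) - M.f ψg))
        = price M ψg e * Ex M (Fm M ψg e) := by
      simp only [Ex, Fm, Finset.mul_sum]
      exact Finset.sum_congr rfl fun φ _ => by ring
    rw [this, price, div_mul_cancel₀ _ hne]
  rw [hEx] at hind
  rw [cEx, div_eq_iff hpos.ne', mul_comm (M.c e), ← hind]
  refine Finset.sum_congr rfl fun φ _ => ?_
  split_ifs with h
  · rw [hmu φ h, Fm]
  · rfl

end
end SSC
end
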